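/- If positive integers x₁, x₂, y₁, y₂ satisfy (3^x₁ - 1)(3^x₂ - 1) = (5^y₁ - 1)(5^y₂ - 1) and 3^x₁ < 5^y₁, then |(3^x₁ - 1)·3^x₂/5^(y₁+y₂) - 1| < 3/5^y₁. -/

import Mathlib

/-!
Up to swapping `x₁` and `x₂`, the only solution in positive integers is
`(3 - 1) * (3 ^ 2 - 1) = (5 - 1) * (5 - 1)`, so the estimate need only be checked there.
To see this, reduce modulo small primes: modulo `3` both exponents of `5` are odd, and then modulo
`13` the exponents of `3` are `1` and `2` modulo `3`, in some order. Say `x₁ ≡ 1` and `x₂ ≡ 2`.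
If `x₁ ≠ 1`, the left side is `1` modulo `9`, which is incompatible with the equation modulo `7`.
If `x₁ = 1` and `x₂ ≠ 2`, the left side is `-2` modulo `27`, which is incompatible with the
equation modulo `7` and `19`.
-/

theorem cast_pow_sub_one_mul_pow_sub_one (R : Type*) [Ring R] {p : ℕ} (hp : 0 < p) (m n : ℕ) :
    (((p ^ m - 1) * (p ^ n - 1) : ℕ) : R) = ((p : R) ^ m - 1) * ((p : R) ^ n - 1) := by
  rw [Nat.cast_mul, Nat.cast_pred (pow_pos hp m), Nat.cast_pred (pow_pos hp n), Nat.cast_pow,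
    Nat.cast_pow]

section ResidueTables

variable {a b c d : ℕ}

theorem odd_of_five_pow_zmod_three (h : ((5 : ZMod 3) ^ c - 1) * (5 ^ d - 1) = 1) :
    Odd c ∧ Odd d := by
  have table : ∀ k l : Fin 2, ((5 : ZMod 3) ^ k.val - 1) * (5 ^ l.val - 1) = 1 →
      k.val = 1 ∧ l.val = 1 := by
    decide +kernel
  have five_sq : (5 : ZMod 3) ^ 2 = 1 := by decide
  rw [pow_eq_pow_mod c five_sq, pow_eq_pow_mod d five_sq] at h
  rw [Nat.odd_iff, Nat.odd_iff]
  exact table ⟨c % 2, by lia⟩ ⟨d % 2, by lia⟩ h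

theorem mod_three_of_zmod_thirteen
    (h : ((3 : ZMod 13) ^ a - 1) * (3 ^ b - 1) = (5 ^ c - 1) * (5 ^ d - 1))
    (hc : Odd c) (hd : Odd d) :
    a % 3 = 1 ∧ b % 3 = 2 ∨ a % 3 = 2 ∧ b % 3 = 1 := by
  have table : ∀ (i j : Fin 3) (k l : Fin 4), k.val % 2 = 1 → l.val % 2 = 1 →
      ((3 : ZMod 13) ^ i.val - 1) * (3 ^ j.val - 1) = (5 ^ k.val - 1) * (5 ^ l.val - 1) →
      i.val = 1 ∧ j.val = 2 ∨ i.val = 2 ∧ j.val = 1 := by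
    decide +kernel
  have three_cube : (3 : ZMod 13) ^ 3 = 1 := by decide
  have five_pow_four : (5 : ZMod 13) ^ 4 = 1 := by decide
  rw [Nat.odd_iff] at hc hd
  rw [pow_eq_pow_mod a three_cube, pow_eq_pow_mod b three_cube,
    pow_eq_pow_mod c five_pow_four, pow_eq_pow_mod d five_pow_four] at h
  exact table ⟨a % 3, by lia⟩ ⟨b % 3, by lia⟩ ⟨c % 4, by lia⟩ ⟨d % 4, by lia⟩
    (by lia) (by lia) h

theorem mod_six_of_zmod_seven
    (h : ((3 : ZMod 7) ^ a - 1) * (3 ^ b - 1) = (5 ^ c - 1) * (5 ^ d - 1))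
    (ha : a % 3 = 1) (hb : b % 3 = 2) (hc : Odd c) (hd : Odd d) :
    a % 6 = 1 ∧ b % 6 = 2 ∧ c % 6 = 1 ∧ d % 6 = 1 ∨
      a % 6 = 1 ∧ b % 6 = 5 ∧ (c % 6 = 1 ∧ d % 6 = 5 ∨ c % 6 = 5 ∧ d % 6 = 1) ∨
      a % 6 = 4 ∧ b % 6 = 2 ∧ (c % 6 = 3 ∧ d % 6 = 5 ∨ c % 6 = 5 ∧ d % 6 = 3) := by
  have table : ∀ i j k l : Fin 6,
      i.val % 3 = 1 → j.val % 3 = 2 → k.val % 2 = 1 → l.val % 2 = 1 →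
      ((3 : ZMod 7) ^ i.val - 1) * (3 ^ j.val - 1) = (5 ^ k.val - 1) * (5 ^ l.val - 1) →
      i.val = 1 ∧ j.val = 2 ∧ k.val = 1 ∧ l.val = 1 ∨
        i.val = 1 ∧ j.val = 5 ∧ (k.val = 1 ∧ l.val = 5 ∨ k.val = 5 ∧ l.val = 1) ∨
        i.val = 4 ∧ j.val = 2 ∧ (k.val = 3 ∧ l.val = 5 ∨ k.val = 5 ∧ l.val = 3) := by
    decide +kernel
  have three_pow_six : (3 : ZMod 7) ^ 6 = 1 := by decide
  have five_pow_six : (5 : ZMod 7) ^ 6 = 1 := by decide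
  rw [Nat.odd_iff] at hc hd
  rw [pow_eq_pow_mod a three_pow_six, pow_eq_pow_mod b three_pow_six,
    pow_eq_pow_mod c five_pow_six, pow_eq_pow_mod d five_pow_six] at h
  exact table ⟨a % 6, by lia⟩ ⟨b % 6, by lia⟩ ⟨c % 6, by lia⟩ ⟨d % 6, by lia⟩
    (by lia) (by lia) (by lia) (by lia) h

theorem mod_six_of_five_pow_zmod_nine (h : ((5 : ZMod 9) ^ c - 1) * (5 ^ d - 1) = 1) :
    c % 6 = 1 ∧ d % 6 = 3 ∨ c % 6 = 3 ∧ d % 6 = 1 ∨ c % 6 = 5 ∧ d % 6 = 5 := by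
  have table : ∀ k l : Fin 6, ((5 : ZMod 9) ^ k.val - 1) * (5 ^ l.val - 1) = 1 →
      k.val = 1 ∧ l.val = 3 ∨ k.val = 3 ∧ l.val = 1 ∨ k.val = 5 ∧ l.val = 5 := by
    decide +kernel
  have five_pow_six : (5 : ZMod 9) ^ 6 = 1 := by decide
  rw [pow_eq_pow_mod c five_pow_six, pow_eq_pow_mod d five_pow_six] at h
  exact table ⟨c % 6, by lia⟩ ⟨d % 6, by lia⟩ h

theorem mod_eighteen_of_five_pow_zmod_twentySeven
    (h : ((5 : ZMod 27) ^ c - 1) * (5 ^ d - 1) = -2) :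
    (c % 18 = 1 ∧ d % 18 = 7 ∨ c % 18 = 7 ∧ d % 18 = 1 ∨ c % 18 = 13 ∧ d % 18 = 13) ∨
      c % 6 = 3 ∧ d % 6 = 5 ∨ c % 6 = 5 ∧ d % 6 = 3 := by
  have table : ∀ k l : Fin 18, ((5 : ZMod 27) ^ k.val - 1) * (5 ^ l.val - 1) = -2 →
      (k.val = 1 ∧ l.val = 7 ∨ k.val = 7 ∧ l.val = 1 ∨ k.val = 13 ∧ l.val = 13) ∨
        k.val % 6 = 3 ∧ l.val % 6 = 5 ∨ k.val % 6 = 5 ∧ l.val % 6 = 3 := by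
    decide +kernel
  have five_pow_eighteen : (5 : ZMod 27) ^ 18 = 1 := by decide +kernel
  rw [pow_eq_pow_mod c five_pow_eighteen, pow_eq_pow_mod d five_pow_eighteen] at h
  have := table ⟨c % 18, by lia⟩ ⟨d % 18, by lia⟩ h
  lia

theorem two_mul_three_pow_sub_one_ne_zmod_nineteen (hb : b % 6 = 2)
    (hcd : c % 9 = 1 ∧ d % 9 = 7 ∨ c % 9 = 7 ∧ d % 9 = 1 ∨ c % 9 = 4 ∧ d % 9 = 4) :
    2 * ((3 : ZMod 19) ^ b - 1) ≠ (5 ^ c - 1) * (5 ^ d - 1) := by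
  have table : ∀ (j : Fin 18) (k l : Fin 9), j.val % 6 = 2 →
      (k.val = 1 ∧ l.val = 7 ∨ k.val = 7 ∧ l.val = 1 ∨ k.val = 4 ∧ l.val = 4) →
      2 * ((3 : ZMod 19) ^ j.val - 1) ≠ (5 ^ k.val - 1) * (5 ^ l.val - 1) := by
    decide +kernel
  have three_pow_eighteen : (3 : ZMod 19) ^ 18 = 1 := by decide +kernel
  have five_pow_nine : (5 : ZMod 19) ^ 9 = 1 := by decide +kernel
  rw [pow_eq_pow_mod b three_pow_eighteen, pow_eq_pow_mod c five_pow_nine,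
    pow_eq_pow_mod d five_pow_nine]
  exact table ⟨b % 18, by lia⟩ ⟨c % 9, by lia⟩ ⟨d % 9, by lia⟩ (by lia) hcd

end ResidueTables

section Solutions

variable {a b c d : ℕ}

theorem three_pow_five_pow_cast (R : Type*) [Ring R]
    (h : (3 ^ a - 1) * (3 ^ b - 1) = (5 ^ c - 1) * (5 ^ d - 1)) :
    ((3 : R) ^ a - 1) * (3 ^ b - 1) = (5 ^ c - 1) * (5 ^ d - 1) := by
  have hcast := congrArg (Nat.cast : ℕ → R) h
  rw [cast_pow_sub_one_mul_pow_sub_one R three_pos,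
    cast_pow_sub_one_mul_pow_sub_one R (by norm_num : 0 < 5)] at hcast
  exact_mod_cast hcast

theorem odd_of_three_pow_five_pow (ha : a ≠ 0) (hb : b ≠ 0)
    (h : (3 ^ a - 1) * (3 ^ b - 1) = (5 ^ c - 1) * (5 ^ d - 1)) : Odd c ∧ Odd d := by
  have three_eq_zero : (3 : ZMod 3) = 0 := by decide
  have h₃ := three_pow_five_pow_cast (ZMod 3) h
  rw [three_eq_zero, zero_pow ha, zero_pow hb] at h₃
  exact odd_of_five_pow_zmod_three (by rw [← h₃]; ring)

theorem eq_one_of_three_pow_five_pow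
    (h : (3 ^ a - 1) * (3 ^ b - 1) = (5 ^ c - 1) * (5 ^ d - 1))
    (ha : a % 3 = 1) (hb : b % 3 = 2) : a = 1 := by
  by_contra ha₁
  obtain ⟨hc, hd⟩ := odd_of_three_pow_five_pow (by lia) (by lia) h
  have three_sq : (3 : ZMod 9) ^ 2 = 0 := by decide
  have h₉ := three_pow_five_pow_cast (ZMod 9) h
  rw [pow_eq_zero_of_le (by lia : 2 ≤ a) three_sq,
    pow_eq_zero_of_le (by lia : 2 ≤ b) three_sq] at h₉
  have residues₉ := mod_six_of_five_pow_zmod_nine (by rw [← h₉]; ring)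
  have residues₇ := mod_six_of_zmod_seven (three_pow_five_pow_cast (ZMod 7) h) ha hb hc hd
  lia

theorem eq_two_of_three_pow_five_pow
    (h : (3 ^ 1 - 1) * (3 ^ b - 1) = (5 ^ c - 1) * (5 ^ d - 1)) (hb : b % 3 = 2) : b = 2 := by
  by_contra hb₂
  obtain ⟨hc, hd⟩ := odd_of_three_pow_five_pow one_ne_zero (by lia) h
  have three_cube : (3 : ZMod 27) ^ 3 = 0 := by decide
  have h₂₇ := three_pow_five_pow_cast (ZMod 27) h
  rw [pow_eq_zero_of_le (by lia : 3 ≤ b) three_cube] at h₂₇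
  have residues₂₇ := mod_eighteen_of_five_pow_zmod_twentySeven (by rw [← h₂₇]; ring)
  have residues₇ := mod_six_of_zmod_seven (three_pow_five_pow_cast (ZMod 7) h) rfl hb hc hd
  refine two_mul_three_pow_sub_one_ne_zmod_nineteen (b := b) (c := c) (d := d)
    (by lia) (by lia) ?_
  rw [← three_pow_five_pow_cast (ZMod 19) h]
  ring

theorem eq_one_of_five_pow_sub_one_mul_eq_sixteen (h : (5 ^ c - 1) * (5 ^ d - 1) = 16) :
    c = 1 ∧ d = 1 := by
  have hc : c ≠ 0 := by rintro rfl; simp at h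
  have hd : d ≠ 0 := by rintro rfl; simp at h
  have hc₅ : 5 ≤ 5 ^ c := Nat.le_self_pow hc 5
  have hd₅ : 5 ≤ 5 ^ d := Nat.le_self_pow hd 5
  obtain ⟨hc₄, hd₄⟩ : 4 = 5 ^ c - 1 ∧ 4 = 5 ^ d - 1 :=
    (mul_eq_mul_iff_eq_and_eq_of_pos (by lia) (by lia) four_pos (by lia)).1 h.symm
  exact ⟨(Nat.pow_eq_self_iff (by norm_num)).1 (by lia : 5 ^ c = 5),
    (Nat.pow_eq_self_iff (by norm_num)).1 (by lia : 5 ^ d = 5)⟩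

theorem exponents_eq_of_three_pow_five_pow_of_mod_three
    (h : (3 ^ a - 1) * (3 ^ b - 1) = (5 ^ c - 1) * (5 ^ d - 1))
    (ha : a % 3 = 1) (hb : b % 3 = 2) : a = 1 ∧ b = 2 ∧ c = 1 ∧ d = 1 := by
  obtain rfl := eq_one_of_three_pow_five_pow h ha hb
  obtain rfl := eq_two_of_three_pow_five_pow h hb
  exact ⟨rfl, rfl, eq_one_of_five_pow_sub_one_mul_eq_sixteen h.symm⟩

theorem exponents_eq_of_three_pow_five_pow (ha : a ≠ 0) (hb : b ≠ 0)
    (h : (3 ^ a - 1) * (3 ^ b - 1) = (5 ^ c - 1) * (5 ^ d - 1)) :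
    (a = 1 ∧ b = 2 ∨ a = 2 ∧ b = 1) ∧ c = 1 ∧ d = 1 := by
  obtain ⟨hc, hd⟩ := odd_of_three_pow_five_pow ha hb h
  rcases mod_three_of_zmod_thirteen (three_pow_five_pow_cast (ZMod 13) h) hc hd with
    ⟨ha₃, hb₃⟩ | ⟨ha₃, hb₃⟩
  · obtain ⟨ha₁, hb₂, hcd⟩ := exponents_eq_of_three_pow_five_pow_of_mod_three h ha₃ hb₃
    exact ⟨Or.inl ⟨ha₁, hb₂⟩, hcd⟩
  · obtain ⟨hb₁, ha₂, hcd⟩ :=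
      exponents_eq_of_three_pow_five_pow_of_mod_three ((mul_comm _ _).trans h) hb₃ ha₃
    exact ⟨Or.inr ⟨ha₂, hb₁⟩, hcd⟩

end Solutions

theorem stmt14_general {x₁ x₂ y₁ y₂ : ℕ} (hx₁ : x₁ ≠ 0) (hx₂ : x₂ ≠ 0)
    (h : (3 ^ x₁ - 1) * (3 ^ x₂ - 1) = (5 ^ y₁ - 1) * (5 ^ y₂ - 1)) :
    |((3 : ℝ) ^ x₁ - 1) * 3 ^ x₂ / 5 ^ (y₁ + y₂) - 1| < 3 / 5 ^ y₁ := by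
  obtain ⟨⟨rfl, rfl⟩ | ⟨rfl, rfl⟩, rfl, rfl⟩ := exponents_eq_of_three_pow_five_pow hx₁ hx₂ h
  · norm_num [abs_lt]
  · norm_num [abs_lt]

theorem stmt14 (x₁ x₂ y₁ y₂ : ℕ) (hx₁ : 0 < x₁) (hx₂ : 0 < x₂) (hy₁ : 0 < y₁) (hy₂ : 0 < y₂)
    (h : (3 ^ x₁ - 1) * (3 ^ x₂ - 1) = (5 ^ y₁ - 1) * (5 ^ y₂ - 1))
    (hlt : 3 ^ x₁ < 5 ^ y₁) :
    |((3 : ℝ) ^ x₁ - 1) * 3 ^ x₂ / 5 ^ (y₁ + y₂) - 1| < 3 / 5 ^ y₁ :=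
  stmt14_general hx₁.ne' hx₂.ne' h
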